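/- Let q be a power of a prime p, let k be a positive integer with k ≡ 0 (mod 4), and let D = {x ∈ F_{q^k}^* : Tr_{q^2/q}(x^{(q^k-1)/(q^2-1)}) = 0}. Then #{b ∈ F_{q^k}^* : w(c_b) = (q-1)(q^{k-1} − q^{k/2 - 1})/(q+1)} = q(q^k - 1)/(q+1) and #{b ∈ F_{q^k}^* : w(c_b) = (q-1)(q^{k-1} + q^{k/2})/(q+1)} = (q^k - 1)/(q+1); in particular every nonzero codeword of C_D has one of these two weights, and the minimum distance of C_D is (q-1)(q^{k-1} − q^{k/2-1})/(q+1). -/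

import Mathlib

/-!
Let `q = |F|`, `[K : F] = 2h`, and consider the quadratic form `Q_a x = Tr (a * x ^ (q + 1))` over
`F`. Every nonzero scalar of `F` is a `(q + 1)`-th power in `K`, so `Q_a` takes all nonzero values
equally often, and its exponential sum `S_a` is an integer that determines the number of zeros of
`Q_a`. For `a ≠ 0` the radical of `Q_a` is the solution set of `a z + a ^ q z ^ (q ^ 2) = 0`, which
has `1` or `q ^ 2` elements; since `Q_a` vanishes on it, `S_a ^ 2` is `q ^ (2h)` or
`q ^ (2h + 2)`. The sign is settled by the congruence `S_a ≡ 1 (mod q + 1)`, which holds because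
the nonzero `x` come in classes of size `q + 1` on which `x ^ (q + 1)` is constant. Hence `S_a` is
`(-q) ^ h` or `(-q) ^ (h + 1)`, and the first moment `∑ a, S_a = q ^ (2h)` yields the
multiplicities.

Elements of `E` of trace zero satisfy `s ^ q = -s` and so form a line over `F`; taking norms from
`K`, the defining set of the code is a single coset `d · {x ^ (q + 1)}`. Therefore `q + 1` times the
weight of the codeword of `b` is the number of nonzeros of `Q_{b d}`.
-/

open Module (finrank)
open QuadraticMap (polar)

section Arithmetic

theorem eq_of_sq_eq_sq_of_dvd_sub_one {d x y : ℤ} (hd : 2 < d) (hx : d ∣ x - 1) (hy : d ∣ y - 1)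
    (hxy : x ^ 2 = y ^ 2) : x = y := by
  refine (sq_eq_sq_iff_eq_or_eq_neg.mp hxy).resolve_right fun h ↦ ?_
  have hdvd : d ∣ 2 := by
    have := (dvd_add hx hy).neg_right
    rwa [h, show -(-y - 1 + (y - 1)) = 2 by ring] at this
  exact (Int.le_of_dvd two_pos hdvd).not_gt hd

theorem neg_one_pow_mul_pow_le {R : Type*} [CommRing R] [LinearOrder R]
    [IsStrictOrderedRing R] {x : R} (hx : 1 ≤ x) (n : ℕ) :
    (-1) ^ n * x ^ (n - 1) ≤ x ^ (if Even n then n - 1 else n) ∧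
      -((-1) ^ n * x ^ n) ≤ x ^ (if Even n then n - 1 else n) := by
  have hpos (m : ℕ) : 0 < x ^ m := pow_pos (one_pos.trans_le hx) m
  split_ifs with hn
  · rw [hn.neg_one_pow]
    constructor <;> linarith [hpos n, hpos (n - 1)]
  · rw [(Nat.not_even_iff_odd.mp hn).neg_one_pow]
    constructor <;> linarith [hpos n, hpos (n - 1)]

end Arithmetic

section Counting

theorem sum_sub_mul_card_of_two_valued {X : Type*} [Fintype X] {R : Type*} [CommRing R] (f : X → R)
    {u v : R} (hf : ∀ x, f x = u ∨ f x = v) :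
    ∑ x, f x - v * Fintype.card X = (u - v) * Nat.card {x // f x = u} := by
  classical
  have hterm (x : X) : f x - v = if f x = u then u - v else 0 := by
    rcases hf x with h | h <;> grind
  calc ∑ x, f x - v * Fintype.card X = ∑ x, (f x - v) := by
        simp [Finset.sum_sub_distrib, mul_comm]
    _ = (u - v) * Nat.card {x // f x = u} := by
        simp only [hterm, ← Finset.sum_filter, Finset.sum_const, nsmul_eq_mul, mul_comm,
          Nat.card_eq_fintype_card, Fintype.card_subtype]

theorem card_subtype_comp_monoidHom {G H : Type*} [Group G] [Group H] (f : G →* H)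
    (P : H → Prop) :
    Nat.card {x // P (f x)} = Nat.card f.ker * Nat.card {y : f.range // P y} := by
  let e : G ≃ f.range × f.ker := Subgroup.groupEquivQuotientProdSubgroup.trans
    ((QuotientGroup.quotientKerEquivRange f).toEquiv.prodCongr (Equiv.refl _))
  have he (x : G) : ((e x).1 : H) = f x := rfl
  rw [Nat.card_congr ((e.subtypeEquiv fun x ↦ by rw [he]).trans
    (Equiv.prodSubtypeFstEquivSubtypeProd (p := fun y : f.range ↦ P y))), Nat.card_prod, mul_comm]

variable {G : Type*} [CommGroup G] [IsCyclic G] [Finite G] {n : ℕ}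

theorem card_subtype_pow (hn : n ∣ Nat.card G) (P : G → Prop) :
    Nat.card {x : G // P (x ^ n)} =
      n * Nat.card {y : (powMonoidHom n : G →* G).range // P y} := by
  have hker : Nat.card (powMonoidHom n : G →* G).ker = n := by
    rw [IsCyclic.card_powMonoidHom_ker, Nat.gcd_eq_right hn]
  simpa only [hker, powMonoidHom_apply] using card_subtype_comp_monoidHom (powMonoidHom n) P

theorem card_pow_eq_zero_or (hn : n ∣ Nat.card G) (y : G) :
    Nat.card {x : G // x ^ n = y} = 0 ∨ Nat.card {x : G // x ^ n = y} = n := by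
  have hle : Nat.card {z : (powMonoidHom n : G →* G).range // (z : G) = y} ≤ 1 :=
    Finite.card_le_one_iff_subsingleton.mpr
      ⟨fun z w ↦ Subtype.ext (Subtype.ext (z.2.trans w.2.symm))⟩
  rw [card_subtype_pow hn (· = y)]
  rcases Nat.le_one_iff_eq_zero_or_eq_one.mp hle with h | h <;> simp [h]

theorem mem_range_powMonoidHom_iff {m : ℕ} (hmn : m * n = Nat.card G) {x : G} :
    x ∈ (powMonoidHom n : G →* G).range ↔ x ^ m = 1 := by
  have hn : 0 < n := Nat.pos_of_mul_pos_left (hmn ▸ Nat.card_pos)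
  suffices h : (powMonoidHom n : G →* G).range = (powMonoidHom m : G →* G).ker by
    rw [h, MonoidHom.mem_ker, powMonoidHom_apply]
  refine Subgroup.eq_of_le_of_card_ge ?_ ?_
  · rintro _ ⟨y, rfl⟩
    rw [MonoidHom.mem_ker, powMonoidHom_apply, powMonoidHom_apply, ← pow_mul, mul_comm, hmn,
      pow_card_eq_one']
  · rw [IsCyclic.card_powMonoidHom_ker, IsCyclic.card_powMonoidHom_range, ← hmn,
      Nat.gcd_mul_right_left, Nat.gcd_mul_left_left, Nat.mul_div_cancel _ hn]

end Counting

section Units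

variable {K : Type*} [GroupWithZero K]

theorem card_subtype_ne_zero_and (P : K → Prop) (c : Kˣ) :
    Nat.card {x : K // x ≠ 0 ∧ P x} = Nat.card {u : Kˣ // P (u * c)} :=
  Nat.card_congr <| ((((Equiv.mulRight c).trans unitsEquivNeZero).subtypeEquiv
    fun _ ↦ Iff.rfl).trans (Equiv.subtypeSubtypeEquivSubtypeInter (· ≠ 0) P)).symm

theorem sum_eq_add_sum_units [Fintype K] [Fintype Kˣ] {M : Type*} [AddCommMonoid M] (f : K → M) :
    ∑ x, f x = f 0 + ∑ u : Kˣ, f u := by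
  classical
  rw [Fintype.sum_eq_add_sum_subtype_ne f 0, ← unitsEquivNeZero.sum_comp]
  rfl

theorem card_subtype_eq_card_units_add [Finite K] (P : K → Prop) [Decidable (P 0)] :
    Nat.card {x // P x} = Nat.card {u : Kˣ // P u} + if P 0 then 1 else 0 := by
  classical
  have := Fintype.ofFinite K
  simp only [Nat.card_eq_fintype_card, Fintype.card_subtype, Finset.card_filter]
  rw [sum_eq_add_sum_units fun x ↦ if P x then 1 else 0, add_comm]
  congr

end Units

section Characters

/-- The number of times the map `Q` takes the value `t`. -/
noncomputable def fiberCard {X A : Type*} (Q : X → A) (t : A) : ℕ :=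
  Nat.card {x // Q x = t}

theorem sum_comp_of_fiberCard_eq {X A R : Type*} [Fintype X] [Fintype A] [Zero A] [CommRing R]
    {Q : X → A} {c : ℕ} (hc : ∀ t ≠ 0, fiberCard Q t = c) (g : A → R) :
    ∑ x, g (Q x) = (fiberCard Q 0 - c) * g 0 + c * ∑ t, g t := by
  classical
  have hfiber (t : A) : ∑ x with Q x = t, g (Q x) = fiberCard Q t * g t := by
    rw [Finset.sum_congr rfl fun x hx ↦ by rw [(Finset.mem_filter.mp hx).2], Finset.sum_const,
      nsmul_eq_mul, fiberCard, Nat.card_eq_fintype_card, Fintype.card_subtype]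
  rw [← Finset.sum_fiberwise Finset.univ Q, Finset.sum_congr rfl fun t _ ↦ hfiber t,
    Fintype.sum_eq_add_sum_subtype_ne _ 0, Fintype.sum_eq_add_sum_subtype_ne g 0,
    Finset.sum_congr rfl fun (t : {t : A // t ≠ 0}) _ ↦ by rw [hc t t.2], ← Finset.mul_sum]
  ring

theorem sum_addChar_mul_sum_inv {V A R : Type*} [AddCommGroup V] [Fintype V] [AddCommGroup A]
    [CommRing R] (ψ : AddChar A R) (Q : V → A) :
    (∑ x, ψ (Q x)) * ∑ y, ψ⁻¹ (Q y) = ∑ z, ψ (Q z) * ∑ y, ψ (polar Q y z) := by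
  have hshift (y z : V) : ψ (Q (y + z)) * ψ⁻¹ (Q y) = ψ (Q z) * ψ (polar Q y z) := by
    rw [AddChar.inv_apply, ← AddChar.map_add_eq_mul, ← AddChar.map_add_eq_mul, polar]
    congr 1
    abel
  simp_rw [Finset.sum_mul_sum, Finset.mul_sum, ← hshift]
  rw [Finset.sum_comm]
  conv_rhs => rw [Finset.sum_comm]
  exact Finset.sum_congr rfl fun y _ ↦
    (Equiv.sum_comp (Equiv.addLeft y) fun x ↦ ψ (Q x) * ψ⁻¹ (Q y)).symm

theorem exists_addChar_ne_one (A : Type*) [AddCommGroup A] [Finite A] [Nontrivial A] :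
    ∃ ψ : AddChar A ℂ, ψ ≠ 1 := by
  obtain ⟨a, ha⟩ := exists_ne (0 : A)
  obtain ⟨ψ, hψ⟩ := AddChar.exists_apply_ne_zero.mpr ha
  exact ⟨ψ, AddChar.ne_one_iff.mpr ⟨a, hψ⟩⟩

variable (F : Type*) {K : Type*} [Field F] [Field K] [Algebra F K]

theorem sum_addChar_trace_mul {R : Type*} [CommRing R] [IsDomain R] [Finite F] [Fintype K]
    [DecidableEq K] {ψ : AddChar F R} (hψ : ψ ≠ 1) (w : K) :
    ∑ y : K, ψ (Algebra.trace F K (y * w)) = if w = 0 then (Fintype.card K : R) else 0 := by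
  let Ψ : AddChar K R := ψ.compAddMonoidHom (Algebra.trace F K).toAddMonoidHom
  have hΨ : Ψ.IsPrimitive := by
    obtain ⟨t, ht⟩ := AddChar.ne_one_iff.mp hψ
    obtain ⟨x, rfl⟩ := Algebra.trace_surjective F K t
    exact AddChar.IsPrimitive.of_ne_one (AddChar.ne_one_iff.mpr ⟨x, ht⟩)
  exact (AddChar.sum_mulShift w hΨ).trans (by push_cast; rfl)

end Characters

section FiniteFields

theorem finrank_eq_of_card_eq_pow {F V : Type*} [Field F] [Fintype F] [AddCommGroup V] [Module F V]
    [Fintype V] {q n : ℕ} (hF : Fintype.card F = q) (hV : Fintype.card V = q ^ n) :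
    finrank F V = n := by
  rw [Module.card_eq_pow_finrank (K := F), hF] at hV
  exact Nat.pow_right_injective (hF ▸ Fintype.one_lt_card) hV

variable {F K : Type*} [Field F] [Field K] [Fintype F] [Finite K] [Algebra F K]

theorem trace_eq_zero_of_pow_card_eq_neg (hK : Even (finrank F K)) {s : K}
    (hs : s ^ Fintype.card F = -s) : Algebra.trace F K s = 0 := by
  have hpow (i : ℕ) : s ^ Fintype.card F ^ i = (-1) ^ i * s := by
    induction i with
    | zero => simp
    | succ i ih =>
      calc s ^ Fintype.card F ^ (i + 1) = FiniteField.frobeniusAlgHom F K ((-1) ^ i * s) := by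
            rw [pow_succ, pow_mul, ih, FiniteField.frobeniusAlgHom_apply]
        _ = (-1) ^ i * s ^ Fintype.card F := by
            simp only [map_mul, map_pow, map_neg, map_one, FiniteField.frobeniusAlgHom_apply]
        _ = (-1) ^ (i + 1) * s := by rw [hs]; ring
  apply (algebraMap F K).injective
  rw [FiniteField.algebraMap_trace_eq_sum_pow, map_zero, Nat.card_eq_fintype_card]
  simp only [hpow, ← Finset.sum_mul, neg_one_geom_sum, if_pos hK, zero_mul]

theorem trace_eq_zero_iff_pow_card_eq_neg (hK : finrank F K = 2) {s : K} :
    Algebra.trace F K s = 0 ↔ s ^ Fintype.card F = -s := by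
  refine ⟨fun h ↦ ?_, trace_eq_zero_of_pow_card_eq_neg (hK ▸ even_two)⟩
  have := FiniteField.algebraMap_trace_eq_sum_pow F K s
  rw [h, hK, map_zero, Finset.sum_range_succ, Finset.sum_range_one, Nat.card_eq_fintype_card,
    pow_zero, pow_one, pow_one] at this
  linear_combination -this

theorem trace_pow_card (s : K) :
    Algebra.trace F K (s ^ Fintype.card F) = Algebra.trace F K s :=
  Algebra.trace_eq_of_algEquiv (FiniteField.frobeniusAlgEquivOfAlgebraic F K) s

theorem sq_card_sub_one_dvd_card_units (hK : Even (finrank F K)) :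
    Fintype.card F ^ 2 - 1 ∣ Nat.card Kˣ := by
  rw [Nat.card_units, Module.natCard_eq_pow_finrank (K := F), Nat.card_eq_fintype_card]
  exact Nat.pow_sub_one_dvd_pow_sub_one _ hK.two_dvd

theorem exists_mul_card_add_one_eq_card_units (hK : Even (finrank F K)) :
    ∃ m, (Fintype.card F - 1) * m * (Fintype.card F + 1) = Nat.card Kˣ := by
  obtain ⟨m, hm⟩ := sq_card_sub_one_dvd_card_units hK
  refine ⟨m, ?_⟩
  rw [hm, show Fintype.card F ^ 2 - 1 = (Fintype.card F + 1) * (Fintype.card F - 1) by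
    simpa using Nat.sq_sub_sq (Fintype.card F) 1]
  ring

end FiniteFields

section GoldForm

variable (F : Type*) {K : Type*} [Field F] [Field K] [Fintype F] [Algebra F K]

local notation "q" => Fintype.card F

/-- The quadratic form `x ↦ Tr (a * x ^ (q + 1))` on `K` over the field `F` with `q` elements;
`x ↦ x ^ (q + 1)` is a Gold function. -/
noncomputable def goldForm (a x : K) : F :=
  Algebra.trace F K (a * x ^ (q + 1))

/-- The radical of the polar form of `goldForm F a`, cut out by `a * z + a ^ q * z ^ q² = 0`;
see `polar_goldForm`. -/
def goldRadical (a : K) : Set K :=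
  {z | a * z + a ^ q * z ^ q ^ 2 = 0}

/-- How many more zeros than ones `goldForm F a` has. This is the exponential sum
`∑ x, ψ (Tr (a * x ^ (q + 1)))` for every nontrivial additive character `ψ` of `F`; see
`sum_addChar_goldForm`. -/
noncomputable def goldSum (a : K) : ℤ :=
  fiberCard (goldForm F a) 0 - fiberCard (goldForm F a) 1

@[simp]
theorem goldForm_zero_right (a : K) : goldForm F a 0 = 0 := by
  simp [goldForm]

@[simp]
theorem goldForm_zero_left (x : K) : goldForm F 0 x = 0 := by
  simp [goldForm]

variable [Finite K]

theorem polar_goldForm (a y z : K) :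
    polar (goldForm F a) y z = Algebra.trace F K (y ^ q * (a * z + a ^ q * z ^ q ^ 2)) := by
  have hadd : (y + z) ^ q = y ^ q + z ^ q := map_add (FiniteField.frobeniusAlgHom F K) y z
  have hfrob : Algebra.trace F K (a * y * z ^ q) =
      Algebra.trace F K (y ^ q * (a ^ q * z ^ q ^ 2)) := by
    rw [← trace_pow_card (F := F)]
    congr 1
    ring
  rw [polar, goldForm, goldForm, goldForm, mul_add (y ^ q), map_add, ← hfrob]
  simp only [← map_sub, ← map_add]
  congr 1
  rw [pow_succ, hadd]
  ring

theorem goldForm_eq_zero_of_mem_goldRadical (hK : Even (finrank F K)) {a z : K}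
    (hz : z ∈ goldRadical F a) : goldForm F a z = 0 := by
  refine trace_eq_zero_of_pow_card_eq_neg hK (eq_neg_of_add_eq_zero_right ?_)
  calc a * z ^ (q + 1) + (a * z ^ (q + 1)) ^ q = z ^ q * (a * z + a ^ q * z ^ q ^ 2) := by ring
    _ = 0 := by rw [hz, mul_zero]

theorem card_goldRadical (hK : Even (finrank F K)) {a : K} (ha : a ≠ 0) :
    Nat.card (goldRadical F a) = 1 ∨ Nat.card (goldRadical F a) = q ^ 2 := by
  classical
  have hq : q ^ 2 = q ^ 2 - 1 + 1 := (Nat.sub_add_cancel (Nat.one_le_pow _ _ Fintype.card_pos)).symm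
  lift a to Kˣ using ha.isUnit
  have hunits (u : Kˣ) :
      (a : K) * u + (a : K) ^ q * (u : K) ^ q ^ 2 = 0 ↔ u ^ (q ^ 2 - 1) = -(a / a ^ q) := by
    have hfactor : (a : K) * u + (a : K) ^ q * (u : K) ^ q ^ 2 =
        (a + a ^ q * u ^ (q ^ 2 - 1)) * u := by
      rw [hq, pow_succ, Nat.add_sub_cancel]
      ring
    rw [hfactor, mul_eq_zero, or_iff_left u.ne_zero, Units.ext_iff]
    push_cast
    rw [← neg_div, eq_div_iff (by simp), add_comm, add_eq_zero_iff_eq_neg, mul_comm]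
  have hcard : Nat.card (goldRadical F (a : K)) =
      Nat.card {u : Kˣ // u ^ (q ^ 2 - 1) = -(a / a ^ q)} + 1 := by
    have hzero : (0 : K) ∈ goldRadical F (a : K) := by simp [goldRadical]
    simp only [← hunits]
    refine (card_subtype_eq_card_units_add (· ∈ goldRadical F (a : K))).trans ?_
    rw [if_pos hzero]
    rfl
  rcases card_pow_eq_zero_or (sq_card_sub_one_dvd_card_units hK) (-(a / a ^ q)) with h | h <;>
    rw [hcard, h]
  · exact .inl rfl
  · exact .inr hq.symm

theorem fiberCard_goldForm_of_ne_zero (hK : Even (finrank F K)) (a : K) (t : F) (ht : t ≠ 0) :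
    fiberCard (goldForm F a) t = fiberCard (goldForm F a) 1 := by
  obtain ⟨m, hm⟩ := exists_mul_card_add_one_eq_card_units hK
  lift t to Fˣ using ht.isUnit
  obtain ⟨c, hc⟩ : Units.map (algebraMap F K) t ∈ (powMonoidHom (q + 1) : Kˣ →* Kˣ).range := by
    rw [mem_range_powMonoidHom_iff hm, pow_mul, ← map_pow, ← Nat.card_eq_fintype_card,
      ← Nat.card_units, pow_card_eq_one', map_one, one_pow]
  have hcK : (c : K) ^ (q + 1) = algebraMap F K t := congr_arg Units.val hc
  have hscale (x : K) : goldForm F a (x * c) = t * goldForm F a x := by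
    rw [goldForm, goldForm, mul_pow, hcK, ← mul_assoc, mul_comm _ (algebraMap F K t),
      ← Algebra.smul_def, map_smul, smul_eq_mul]
  exact (Nat.card_congr <| c.mulRight.subtypeEquiv fun x ↦ by simp [hscale]).symm

theorem card_add_one_dvd_goldSum_sub_one (hK : Even (finrank F K)) (a : K) :
    (q + 1 : ℤ) ∣ goldSum F a - 1 := by
  classical
  obtain ⟨m, hm⟩ := exists_mul_card_add_one_eq_card_units hK
  let N (t : F) : ℕ :=
    Nat.card {y : (powMonoidHom (q + 1) : Kˣ →* Kˣ).range // Algebra.trace F K (a * (y : Kˣ)) = t}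
  have hfiber (t : F) :
      fiberCard (goldForm F a) t = (q + 1) * N t + if (0 : F) = t then 1 else 0 := by
    have h := card_subtype_eq_card_units_add (goldForm F a · = t)
    simp only [goldForm_zero_right] at h
    rw [fiberCard, h]
    congr 1
    simpa [goldForm] using
      card_subtype_pow (Dvd.intro_left _ hm) fun y : Kˣ ↦ Algebra.trace F K (a * y) = t
  refine ⟨N 0 - N 1, ?_⟩
  rw [goldSum, hfiber, hfiber, if_pos rfl, if_neg zero_ne_one]
  push_cast
  ring

theorem card_eq_goldSum_add (hK : Even (finrank F K)) (a : K) :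
    (Nat.card K : ℤ) = goldSum F a + q * fiberCard (goldForm F a) 1 := by
  have := Fintype.ofFinite K
  simpa [goldSum, mul_comm] using
    sum_comp_of_fiberCard_eq (fiberCard_goldForm_of_ne_zero F hK a) (1 : F → ℤ)

theorem goldSum_zero (hK : Even (finrank F K)) : goldSum F (0 : K) = Nat.card K := by
  rw [card_eq_goldSum_add F hK 0]
  simp [fiberCard]

theorem sum_addChar_goldForm [Fintype K] (hK : Even (finrank F K)) {ψ : AddChar F ℂ} (hψ : ψ ≠ 1)
    (a : K) : ∑ x, ψ (goldForm F a x) = goldSum F a := by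
  rw [sum_comp_of_fiberCard_eq (fiberCard_goldForm_of_ne_zero F hK a) ψ, goldSum,
    AddChar.sum_eq_zero_of_ne_one hψ]
  simp

theorem sum_goldSum [Fintype K] (hK : Even (finrank F K)) :
    ∑ a : K, goldSum F a = Nat.card K := by
  classical
  obtain ⟨ψ, hψ⟩ := exists_addChar_ne_one F
  have h : ∑ a : K, (goldSum F a : ℂ) = Nat.card K := by
    simp only [← sum_addChar_goldForm F hK hψ]
    rw [Finset.sum_comm]
    simp only [goldForm, sum_addChar_trace_mul F hψ]
    simp
  exact_mod_cast h

theorem sum_addChar_polar_goldForm [Fintype K] {ψ : AddChar F ℂ} (hψ : ψ ≠ 1) (a z : K)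
    [Decidable (z ∈ goldRadical F a)] :
    ∑ y, ψ (polar (goldForm F a) y z) = if z ∈ goldRadical F a then (Nat.card K : ℂ) else 0 := by
  classical
  simp only [polar_goldForm]
  refine ((FiniteField.frobeniusAlgEquivOfAlgebraic F K).toEquiv.sum_comp fun y ↦
    ψ (Algebra.trace F K (y * (a * z + a ^ q * z ^ q ^ 2)))).trans ?_
  rw [sum_addChar_trace_mul F hψ]
  simp [goldRadical]

theorem goldSum_sq (hK : Even (finrank F K)) (a : K) :
    goldSum F a ^ 2 = Nat.card K * Nat.card (goldRadical F a) := by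
  classical
  have := Fintype.ofFinite K
  obtain ⟨ψ, hψ⟩ := exists_addChar_ne_one F
  have hterm (z : K) : ψ (goldForm F a z) * ∑ y, ψ (polar (goldForm F a) y z) =
      if z ∈ goldRadical F a then (Nat.card K : ℂ) else 0 := by
    rw [sum_addChar_polar_goldForm F hψ]
    split_ifs with hz
    · simp [goldForm_eq_zero_of_mem_goldRadical F hK hz]
    · simp
  have h : (goldSum F a ^ 2 : ℂ) = Nat.card K * Nat.card (goldRadical F a) := by
    calc (goldSum F a ^ 2 : ℂ) = (∑ x, ψ (goldForm F a x)) * ∑ y, ψ⁻¹ (goldForm F a y) := by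
          rw [sum_addChar_goldForm F hK hψ, sum_addChar_goldForm F hK (inv_ne_one.mpr hψ), sq]
      _ = ∑ z, if z ∈ goldRadical F a then (Nat.card K : ℂ) else 0 := by
          rw [sum_addChar_mul_sum_inv]
          exact Finset.sum_congr rfl fun z _ ↦ hterm z
      _ = Nat.card K * Nat.card (goldRadical F a) := by
          simp [← Finset.sum_filter, Fintype.card_subtype, mul_comm]
  exact_mod_cast h

theorem goldSum_eq {h : ℕ} (hK : finrank F K = 2 * h) {a : K} (ha : a ≠ 0) :
    goldSum F a = (-q) ^ h ∨ goldSum F a = (-q) ^ (h + 1) := by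
  have hKeven : Even (finrank F K) := hK ▸ even_two_mul h
  have hq : (2 : ℤ) < q + 1 := by
    have := Fintype.one_lt_card (α := F)
    omega
  have hpow (n : ℕ) : (q + 1 : ℤ) ∣ (-q) ^ n - 1 := by
    refine dvd_trans ?_ (sub_one_dvd_pow_sub_one _ n)
    exact ⟨-1, by ring⟩
  have heq (n : ℕ) (hn : goldSum F a ^ 2 = ((-q) ^ n) ^ 2) : goldSum F a = (-q) ^ n :=
    eq_of_sq_eq_sq_of_dvd_sub_one hq (card_add_one_dvd_goldSum_sub_one F hKeven a) (hpow n) hn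
  have hcard : (Nat.card K : ℤ) = ((-q) ^ h) ^ 2 := by
    rw [Module.natCard_eq_pow_finrank (K := F), hK, Nat.card_eq_fintype_card, ← pow_mul, mul_comm h,
      (even_two_mul h).neg_pow, Nat.cast_pow]
  refine (card_goldRadical F hKeven ha).imp (fun hrad ↦ heq _ ?_) fun hrad ↦ heq _ ?_
  · rw [goldSum_sq F hKeven, hrad, hcard, Nat.cast_one, mul_one]
  · rw [goldSum_sq F hKeven, hrad, hcard]
    push_cast
    ring

theorem sum_units_goldSum [Fintype Kˣ] (hK : Even (finrank F K)) :
    ∑ u : Kˣ, goldSum F (u : K) = 0 := by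
  have := Fintype.ofFinite K
  have h := sum_goldSum F hK
  rwa [sum_eq_add_sum_units, goldSum_zero F hK, add_eq_left] at h

theorem card_add_one_mul_card_goldSum_eq {h : ℕ} (hK : finrank F K = 2 * h) :
    (q + 1 : ℤ) * Nat.card {u : Kˣ // goldSum F (u : K) = (-q) ^ h} = q * Nat.card Kˣ ∧
    (q + 1 : ℤ) * Nat.card {u : Kˣ // goldSum F (u : K) = (-q) ^ (h + 1)} = Nat.card Kˣ := by
  have := Fintype.ofFinite Kˣ
  have hq : (-q : ℤ) ^ h ≠ 0 := pow_ne_zero _ (neg_ne_zero.mpr (mod_cast Fintype.card_ne_zero))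
  have hsum := sum_units_goldSum F (K := K) (hK ▸ even_two_mul h)
  have hval (u : Kˣ) := goldSum_eq F hK u.ne_zero
  have hlow := sum_sub_mul_card_of_two_valued _ hval
  have hhigh := sum_sub_mul_card_of_two_valued _ fun u ↦ (hval u).symm
  rw [hsum, ← Nat.card_eq_fintype_card (α := Kˣ)] at hlow hhigh
  constructor <;> apply mul_left_cancel₀ hq
  · linear_combination -hlow
  · linear_combination hhigh

theorem card_mul_card_goldForm_ne_zero (hK : Even (finrank F K)) (a : K) :
    (q : ℤ) * Nat.card {x // goldForm F a x ≠ 0} = (q - 1) * (Nat.card K - goldSum F a) := by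
  have := Fintype.ofFinite K
  have hcompl : Nat.card K = fiberCard (goldForm F a) 0 + Nat.card {x // goldForm F a x ≠ 0} := by
    classical
    rw [← Nat.card_congr (Equiv.sumCompl (goldForm F a · = 0)), Nat.card_sum]
    rfl
  have hcard := card_eq_goldSum_add F hK a
  rw [goldSum] at hcard ⊢
  have hcompl' : (Nat.card K : ℤ) =
    fiberCard (goldForm F a) 0 + Nat.card {x // goldForm F a x ≠ 0} := mod_cast hcompl
  linear_combination hcard - (q : ℤ) * hcompl'

end GoldForm

section Code

variable (F E K : Type*) [Field F] [Field E] [Field K] [Algebra F E] [Algebra E K]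

/-- The defining set of the code: the nonzero `x : K` whose norm down to `E` has trace zero
over `F`. -/
def traceNormZeros : Set K :=
  {x | x ≠ 0 ∧ Algebra.trace F E (Algebra.norm E x) = 0}

variable {F E} in
theorem exists_units_mem_traceNormZeros [Finite K] (hE : finrank F E = 2) :
    ∃ d : Kˣ, (d : K) ∈ traceNormZeros F E K := by
  have := Module.finite_of_finrank_eq_succ hE
  have hker : LinearMap.ker (Algebra.trace F E) ≠ ⊥ :=
    LinearMap.ker_ne_bot_of_finrank_lt (by rw [hE, Module.finrank_self]; exact one_lt_two)
  obtain ⟨s, hs, hs0⟩ := Submodule.exists_mem_ne_zero_of_ne_bot hker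
  obtain ⟨d, rfl⟩ := FiniteField.norm_surjective E K s
  have hd : d ≠ 0 := by
    rintro rfl
    simp at hs0
  exact ⟨Units.mk0 d hd, hd, hs⟩

variable {F E K}

theorem algebraMap_norm_eq_pow_of_card_units [Fintype F] [Finite K] (hE : finrank F E = 2) {m : ℕ}
    (hm : (Fintype.card F - 1) * m * (Fintype.card F + 1) = Nat.card Kˣ) (x : K) :
    algebraMap E K (Algebra.norm E x) = x ^ m := by
  have := Finite.of_injective _ (algebraMap E K).injective
  have hcardE : Nat.card E - 1 = (Fintype.card F + 1) * (Fintype.card F - 1) := by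
    rw [Module.natCard_eq_pow_finrank (K := F), hE, Nat.card_eq_fintype_card]
    simpa using Nat.sq_sub_sq (Fintype.card F) 1
  have hcardK : Nat.card K - 1 = m * (Nat.card E - 1) := by
    rw [← Nat.card_units, ← hm, hcardE]
    ring
  rw [FiniteField.algebraMap_norm_eq_pow, hcardK,
    Nat.mul_div_cancel _ (Nat.sub_pos_of_lt Finite.one_lt_card)]

variable (F) [Algebra F K]

/-- The Hamming weight of the codeword `(Tr (b * d))_{d ∈ D}` of the trace code `C_D` over `F`. -/
noncomputable def traceWeight (D : Set K) (b : K) : ℕ :=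
  Nat.card {d // d ∈ D ∧ Algebra.trace F K (b * d) ≠ 0}

variable {F} [Finite K]

theorem even_finrank_of_finrank_eq_two (hE : finrank F E = 2) : Even (finrank F K) := by
  have := Finite.of_injective _ (algebraMap E K).injective
  have := Finite.of_injective _ (algebraMap F K).injective
  suffices h : finrank F K = 2 * finrank E K from h ▸ even_two_mul _
  apply Nat.pow_right_injective (Finite.one_lt_card (α := F))
  simp only [pow_mul, ← hE, ← Module.natCard_eq_pow_finrank]

variable [Fintype F]

local notation "q" => Fintype.card F

theorem mul_mem_traceNormZeros_iff (hE : finrank F E = 2) {d : Kˣ}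
    (hd : (d : K) ∈ traceNormZeros F E K) (u : Kˣ) :
    (u * d : K) ∈ traceNormZeros F E K ↔ u ∈ (powMonoidHom (q + 1) : Kˣ →* Kˣ).range := by
  have := Finite.of_injective _ (algebraMap E K).injective
  obtain ⟨m, hm⟩ := exists_mul_card_add_one_eq_card_units (K := K)
    (even_finrank_of_finrank_eq_two hE)
  have hq := Fintype.one_lt_card (α := F)
  have hs := (trace_eq_zero_iff_pow_card_eq_neg hE).mp hd.2
  have hs0 : Algebra.norm E (d : K) ≠ 0 := by simp
  have hpow : u ^ (m * q) = u ^ ((q - 1) * m) * u ^ m := by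
    rw [← pow_add, ← Nat.succ_mul, Nat.succ_eq_add_one, Nat.sub_add_cancel hq.le, mul_comm]
  calc (u * d : K) ∈ traceNormZeros F E K
      ↔ Algebra.trace F E (Algebra.norm E (u : K) * Algebra.norm E (d : K)) = 0 := by
        simp [traceNormZeros]
    _ ↔ Algebra.norm E (u : K) ^ q = Algebra.norm E (u : K) := by
        rw [trace_eq_zero_iff_pow_card_eq_neg hE, mul_pow, hs, mul_neg, neg_inj,
          mul_left_inj' hs0]
    _ ↔ u ^ (m * q) = u ^ m := by
        rw [← (algebraMap E K).injective.eq_iff, map_pow,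
          algebraMap_norm_eq_pow_of_card_units hE hm, ← pow_mul, Units.ext_iff]
        push_cast
        rfl
    _ ↔ u ∈ (powMonoidHom (q + 1) : Kˣ →* Kˣ).range := by
        rw [mem_range_powMonoidHom_iff hm, hpow, mul_eq_right]

theorem card_add_one_mul_traceWeight (hE : finrank F E = 2) {d : Kˣ}
    (hd : (d : K) ∈ traceNormZeros F E K) (b : K) :
    (q + 1) * traceWeight F (traceNormZeros F E K) b =
      Nat.card {x // goldForm F (b * d) x ≠ 0} := by
  classical
  let P (y : Kˣ) : Prop := Algebra.trace F K (b * (y * d : K)) ≠ 0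
  obtain ⟨m, hm⟩ := exists_mul_card_add_one_eq_card_units (K := K)
    (even_finrank_of_finrank_eq_two hE)
  have hweight : traceWeight F (traceNormZeros F E K) b =
      Nat.card {y : (powMonoidHom (q + 1) : Kˣ →* Kˣ).range // P y} := by
    calc traceWeight F (traceNormZeros F E K) b
        = Nat.card {x : K // x ≠ 0 ∧ x ∈ traceNormZeros F E K ∧
            Algebra.trace F K (b * x) ≠ 0} :=
          Nat.card_congr (Equiv.subtypeEquivRight fun x ↦ by simp [traceNormZeros, and_assoc])
      _ = Nat.card {u : Kˣ // u ∈ (powMonoidHom (q + 1) : Kˣ →* Kˣ).range ∧ P u} := by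
          rw [card_subtype_ne_zero_and _ d]
          simp only [mul_mem_traceNormZeros_iff hE hd, P]
      _ = _ := (Nat.card_congr (Equiv.subtypeSubtypeEquivSubtypeInter _ _)).symm
  have hform (u : Kˣ) : P (u ^ (q + 1)) ↔ goldForm F (b * d) (u : K) ≠ 0 := by
    simp only [P, goldForm]
    push_cast
    rw [mul_comm _ (d : K), mul_assoc]
  rw [hweight, ← card_subtype_pow (Dvd.intro_left _ hm) P,
    card_subtype_eq_card_units_add (goldForm F (b * d) · ≠ 0), if_neg (by simp)]
  simp only [hform, add_zero]

theorem card_mul_card_add_one_mul_traceWeight (hE : finrank F E = 2)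
    {d : Kˣ} (hd : (d : K) ∈ traceNormZeros F E K) (b : K) :
    (q * (q + 1) * traceWeight F (traceNormZeros F E K) b : ℤ) =
      (q - 1) * (Nat.card K - goldSum F (b * d)) := by
  rw [← card_mul_card_goldForm_ne_zero F (even_finrank_of_finrank_eq_two hE),
    ← card_add_one_mul_traceWeight hE hd]
  push_cast
  ring

theorem traceWeight_eq_iff (hE : finrank F E = 2) {d : Kˣ}
    (hd : (d : K) ∈ traceNormZeros F E K) (b : K) {Q c : ℚ} (hQ : (Nat.card K : ℚ) = q * Q) :
    (traceWeight F (traceNormZeros F E K) b : ℚ) = (q - 1) * (Q - c) / (q + 1) ↔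
      (goldSum F (b * d) : ℚ) = q * c := by
  have hq : (1 : ℚ) < q := mod_cast Fintype.one_lt_card
  have hweight : (q * (q + 1) * traceWeight F (traceNormZeros F E K) b : ℚ) =
      (q - 1) * (q * Q - goldSum F (b * d)) := by
    rw [← hQ]
    exact_mod_cast card_mul_card_add_one_mul_traceWeight hE hd b
  rw [eq_div_iff (by positivity)]
  refine ⟨fun h ↦ mul_left_cancel₀ (sub_ne_zero.mpr hq.ne') ?_,
    fun h ↦ mul_left_cancel₀ (show (q : ℚ) ≠ 0 by positivity) ?_⟩
  · linear_combination hweight - q * h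
  · linear_combination hweight - (q - 1) * h

end Code

section Main

variable {F E K : Type*} [Field F] [Field E] [Field K] [Fintype F] [Fintype E] [Fintype K]
  [Algebra F E] [Algebra E K] [Algebra F K] {q k : ℕ}

theorem exists_traceWeight_eq_iff (hF : Fintype.card F = q) (hE : Fintype.card E = q ^ 2)
    (hK : Fintype.card K = q ^ k) :
    ∃ d : Kˣ, ∀ b,
      ((traceWeight F (traceNormZeros F E K) b : ℚ) =
          (q - 1) * (q ^ (k - 1) - (-1) ^ (k / 2) * q ^ (k / 2 - 1)) / (q + 1) ↔
        goldSum F (b * d) = (-q) ^ (k / 2)) ∧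
      ((traceWeight F (traceNormZeros F E K) b : ℚ) =
          (q - 1) * (q ^ (k - 1) + (-1) ^ (k / 2) * q ^ (k / 2)) / (q + 1) ↔
        goldSum F (b * d) = (-q) ^ (k / 2 + 1)) := by
  have hE2 : finrank F E = 2 := finrank_eq_of_card_eq_pow hF hE
  obtain ⟨d, hd⟩ := exists_units_mem_traceNormZeros K hE2
  have hkF : finrank F K = k := finrank_eq_of_card_eq_pow hF hK
  have hk0 : 0 < finrank F K := Module.finrank_pos
  obtain ⟨h, rfl⟩ : ∃ h, k = 2 * (h + 1) := by
    obtain ⟨n, hn⟩ : Even (finrank F K) := even_finrank_of_finrank_eq_two hE2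
    exact ⟨n - 1, by omega⟩
  subst hF
  have hQ : (Nat.card K : ℚ) = Fintype.card F * (Fintype.card F : ℚ) ^ (2 * h + 1) := by
    rw [Nat.card_eq_fintype_card, hK]
    push_cast
    ring
  refine ⟨d, fun b ↦ ?_⟩
  rw [Nat.mul_div_cancel_left _ two_pos, Nat.add_sub_cancel,
    show 2 * (h + 1) - 1 = 2 * h + 1 by omega, ← sub_neg_eq_add (_ ^ (2 * h + 1)),
    traceWeight_eq_iff hE2 hd b hQ, traceWeight_eq_iff hE2 hd b hQ]
  constructor <;> rw [← Int.cast_inj (α := ℚ), neg_pow (Fintype.card F : ℤ)] <;> push_cast <;>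
    ring_nf

theorem stmt6_general (hF : Fintype.card F = q) (hE : Fintype.card E = q ^ 2)
    (hK : Fintype.card K = q ^ k) :
    (Nat.card {b : K // b ≠ 0 ∧ (traceWeight F (traceNormZeros F E K) b : ℚ) =
        (q - 1) * (q ^ (k - 1) - (-1) ^ (k / 2) * q ^ (k / 2 - 1)) / (q + 1)} : ℚ) =
      q * (q ^ k - 1) / (q + 1) ∧
    (Nat.card {b : K // b ≠ 0 ∧ (traceWeight F (traceNormZeros F E K) b : ℚ) =
        (q - 1) * (q ^ (k - 1) + (-1) ^ (k / 2) * q ^ (k / 2)) / (q + 1)} : ℚ) =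
      (q ^ k - 1) / (q + 1) ∧
    (∀ b : K, b ≠ 0 →
      (traceWeight F (traceNormZeros F E K) b : ℚ) =
          (q - 1) * (q ^ (k - 1) - (-1) ^ (k / 2) * q ^ (k / 2 - 1)) / (q + 1) ∨
      (traceWeight F (traceNormZeros F E K) b : ℚ) =
          (q - 1) * (q ^ (k - 1) + (-1) ^ (k / 2) * q ^ (k / 2)) / (q + 1)) ∧
    (∀ b : K, b ≠ 0 →
      (q - 1) * (q ^ (k - 1) - q ^ (if Even (k / 2) then k / 2 - 1 else k / 2)) / (q + 1) ≤
        (traceWeight F (traceNormZeros F E K) b : ℚ)) := by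
  have hkF : finrank F K = 2 * (k / 2) := by
    rw [← finrank_eq_of_card_eq_pow hF hK, Nat.two_mul_div_two_of_even]
    exact even_finrank_of_finrank_eq_two (finrank_eq_of_card_eq_pow hF hE)
  obtain ⟨d, hd⟩ := exists_traceWeight_eq_iff hF hE hK
  subst hF
  have hcount (n : ℕ) : Nat.card {b : K // b ≠ 0 ∧ goldSum F (b * d) = (-Fintype.card F) ^ n} =
      Nat.card {u : Kˣ // goldSum F (u : K) = (-Fintype.card F) ^ n} := by
    simp [card_subtype_ne_zero_and _ d⁻¹]
  have hunits : (Nat.card Kˣ : ℚ) = Fintype.card F ^ k - 1 := by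
    rw [Nat.card_units, Nat.card_eq_fintype_card, hK, Nat.cast_pred (hK ▸ Fintype.card_pos),
      Nat.cast_pow]
  obtain ⟨hlow, hhigh⟩ := card_add_one_mul_card_goldSum_eq F hkF
  have hvalues (b : K) (hb : b ≠ 0) := goldSum_eq F hkF (mul_ne_zero hb d.ne_zero)
  simp only [← hd] at hvalues
  refine ⟨?_, ?_, hvalues, fun b hb ↦ ?_⟩
  · simp only [hd, hcount, eq_div_iff (show (Fintype.card F + 1 : ℚ) ≠ 0 by positivity), ← hunits]
    rw [mul_comm]
    exact_mod_cast hlow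
  · simp only [hd, hcount, eq_div_iff (show (Fintype.card F + 1 : ℚ) ≠ 0 by positivity), ← hunits]
    rw [mul_comm]
    exact_mod_cast hhigh
  · have hq : (1 : ℚ) ≤ Fintype.card F := mod_cast Fintype.card_pos
    obtain ⟨hle, hle'⟩ := neg_one_pow_mul_pow_le hq (k / 2)
    rcases hvalues b hb with h | h <;> (rw [h]; gcongr <;> linarith)

end Main

/-- **Proposition 1, `k ≡ 0 (mod 4)`.** Let `q` be a power of a prime `p`,
`k ≡ 0 (mod 4)`, `k > 0`, and `D = {x ∈ F_{q^k}ˣ : Tr_{q²/q}(x^{(q^k-1)/(q²-1)}) = 0}`.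
Then exactly `q(q^k-1)/(q+1)` nonzero `b` give weight `(q-1)(q^{k-1} - q^{k/2-1})/(q+1)`,
exactly `(q^k-1)/(q+1)` give weight `(q-1)(q^{k-1} + q^{k/2})/(q+1)`, every nonzero
codeword has one of these two weights, and the minimum distance is the smaller weight. -/
theorem stmt6 (p e q k : ℕ) [Fact p.Prime] (he : 0 < e) (hq : q = p ^ e)
    (hk : 0 < k) (hk4 : k % 4 = 0)
    (Fq Ff Fk : Type) [Field Fq] [Field Ff] [Field Fk]
    [Fintype Fq] [Fintype Ff] [Fintype Fk]
    [Algebra Fq Ff] [Algebra Ff Fk] [Algebra Fq Fk] [IsScalarTower Fq Ff Fk]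
    (hcq : Fintype.card Fq = q) (hcf : Fintype.card Ff = q ^ 2)
    (hck : Fintype.card Fk = q ^ k)
    (hnorm : ∀ x : Fk,
      algebraMap Ff Fk (Algebra.norm Ff x) = x ^ ((q ^ k - 1) / (q ^ 2 - 1))) :
    (Nat.card {b : Fk // b ≠ 0 ∧
        (Nat.card {d : Fk // (d ≠ 0 ∧ Algebra.trace Fq Ff (Algebra.norm Ff d) = 0) ∧
            Algebra.trace Fq Fk (b * d) ≠ 0} : ℚ)
          = ((q : ℚ) - 1) * ((q : ℚ) ^ (k - 1) - (q : ℚ) ^ (k / 2 - 1)) / ((q : ℚ) + 1)} : ℚ)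
      = (q : ℚ) * ((q : ℚ) ^ k - 1) / ((q : ℚ) + 1) ∧
    (Nat.card {b : Fk // b ≠ 0 ∧
        (Nat.card {d : Fk // (d ≠ 0 ∧ Algebra.trace Fq Ff (Algebra.norm Ff d) = 0) ∧
            Algebra.trace Fq Fk (b * d) ≠ 0} : ℚ)
          = ((q : ℚ) - 1) * ((q : ℚ) ^ (k - 1) + (q : ℚ) ^ (k / 2)) / ((q : ℚ) + 1)} : ℚ)
      = ((q : ℚ) ^ k - 1) / ((q : ℚ) + 1) ∧
    (∀ b : Fk, b ≠ 0 →
      (Nat.card {d : Fk // (d ≠ 0 ∧ Algebra.trace Fq Ff (Algebra.norm Ff d) = 0) ∧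
          Algebra.trace Fq Fk (b * d) ≠ 0} : ℚ)
          = ((q : ℚ) - 1) * ((q : ℚ) ^ (k - 1) - (q : ℚ) ^ (k / 2 - 1)) / ((q : ℚ) + 1) ∨
      (Nat.card {d : Fk // (d ≠ 0 ∧ Algebra.trace Fq Ff (Algebra.norm Ff d) = 0) ∧
          Algebra.trace Fq Fk (b * d) ≠ 0} : ℚ)
          = ((q : ℚ) - 1) * ((q : ℚ) ^ (k - 1) + (q : ℚ) ^ (k / 2)) / ((q : ℚ) + 1)) ∧
    (∀ b : Fk, b ≠ 0 →
      ((q : ℚ) - 1) * ((q : ℚ) ^ (k - 1) - (q : ℚ) ^ (k / 2 - 1)) / ((q : ℚ) + 1)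
        ≤ (Nat.card {d : Fk // (d ≠ 0 ∧ Algebra.trace Fq Ff (Algebra.norm Ff d) = 0) ∧
            Algebra.trace Fq Fk (b * d) ≠ 0} : ℚ)) := by
  have hk2 : Even (k / 2) := ⟨k / 4, by omega⟩
  have h := stmt6_general (E := Ff) (K := Fk) hcq hcf hck
  simp only [hk2, if_pos, Even.neg_one_pow, one_mul] at h
  exact h
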